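/- Let σ ≥ 0 and let ν be a σ-finite Borel measure on ℝ concentrated on (−∞,0) with ∫_{(−∞,0)} min(z², |z|) ν(dz) < ∞ and ∫_{(−∞,−1)} z² ν(dz) < ∞, and assume either σ > 0 or liminf_{x ↓ 0} x^{s−2} ∫_{(−x,0)} z² ν(dz) > 0 for some s ∈ (0,2). For λ ∈ ℝ define Ψ(iλ) := −σ²λ²/2 + ∫_{(−∞,0)} (e^{iλz} − 1 − iλz) ν(dz), and set c² := σ² + ∫_{(−∞,0)} z² ν(dz) (so c > 0). Then for every b ∈ ℝ: (i) for all t > 1 the function λ ↦ exp(tΨ(iλ)) is absolutely integrable on ℝ, so p(t,b) := (1/(2π)) ∫_ℝ e^{−ibλ} exp(tΨ(iλ)) dλ is well defined; and (ii) lim_{t → ∞} √(2πt) · p(t,b) = 1/c. -/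

import Mathlib

open Filter MeasureTheory Set

/-- The characteristic exponent `Ψ(iλ)` of a spectrally negative Lévy process with
drift `m = 0`, Gaussian coefficient `σ` and Lévy measure `ν`. -/
noncomputable def charExponent (σ : ℝ) (ν : MeasureTheory.Measure ℝ) (lam : ℝ) : ℂ :=
  ((-(σ ^ 2 * lam ^ 2) / 2 : ℝ) : ℂ) +
    ∫ z in Iio (0 : ℝ),
      (Complex.exp (Complex.I * lam * z) - 1 - Complex.I * lam * z) ∂ν

/-- The Fourier-inversion density of `X_t` at `b`. -/
noncomputable def fourierDensity (σ : ℝ) (ν : MeasureTheory.Measure ℝ) (t b : ℝ) : ℂ :=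
  ((1 / (2 * Real.pi) : ℝ) : ℂ) *
    ∫ lam : ℝ, Complex.exp (-(Complex.I) * b * lam) * Complex.exp ((t : ℂ) * charExponent σ ν lam)

open Asymptotics
open scoped Real Topology

/-! After the substitution `λ = u / √t`, the integrand `exp (t Ψ(u / √t))` converges pointwise to
the Gaussian `exp (-c² u² / 2)`, because `Ψ(λ) = -c² λ² / 2 + o(λ²)` at the origin. Either
alternative in the hypotheses forces `Re Ψ(λ) ≤ -k min(λ², |λ|ˢ)`, through
`1 - cos x ≥ 2 x² / π²` on `[-π, π]` in the second one. For `s ≤ 2` and `t ≥ 1` this bound survives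
the substitution, so it supplies a dominating function. -/

/-- The profile `min(x², |x|ˢ)`: Gaussian near the origin and `s`-stable at infinity. It measures
how fast the real part of an exponent decreases. -/
noncomputable def stableGauge (s x : ℝ) : ℝ := min (x ^ 2) (|x| ^ s)

lemma stableGauge_le_sq (s x : ℝ) : stableGauge s x ≤ x ^ 2 := min_le_left _ _

lemma stableGauge_le_rpow (s x : ℝ) : stableGauge s x ≤ |x| ^ s := min_le_right _ _

lemma measurable_stableGauge (s : ℝ) : Measurable (stableGauge s) := by
  unfold stableGauge
  fun_prop

lemma stableGauge_le_mul_stableGauge_div_sqrt {s t : ℝ} (hs : s ≤ 2) (ht : 1 ≤ t) (u : ℝ) :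
    stableGauge s u ≤ t * stableGauge s (u / √t) := by
  have ht0 : 0 < t := by linarith
  have hsqrt : 0 < √t := Real.sqrt_pos.2 ht0
  have hpow : √t ^ s ≤ t := calc
    √t ^ s ≤ √t ^ (2 : ℝ) := Real.rpow_le_rpow_of_exponent_le (Real.one_le_sqrt.2 ht) hs
    _ = t := by rw [Real.rpow_two, Real.sq_sqrt ht0.le]
  rw [stableGauge, stableGauge, mul_min_of_nonneg _ _ ht0.le]
  refine min_le_min ?_ ?_
  · rw [div_pow, Real.sq_sqrt ht0.le, mul_div_cancel₀ _ ht0.ne']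
  · rw [abs_div, abs_of_pos hsqrt, Real.div_rpow (abs_nonneg _) hsqrt.le, mul_div_assoc',
      le_div_iff₀ (by positivity), mul_comm]
    gcongr

lemma integrable_exp_neg_mul_abs_rpow {s k : ℝ} (hs : 0 < s) (hk : 0 < k) :
    Integrable fun u : ℝ => Real.exp (-k * |u| ^ s) := by
  -- The Bochner integral of a nonintegrable function is zero, and this one is a Gamma value.
  refine not_imp_comm.1 integral_undef ?_
  rw [integral_comp_abs (f := fun u => Real.exp (-k * u ^ s)), integral_exp_neg_mul_rpow hs hk]
  have : 0 < Real.Gamma (1 / s + 1) := Real.Gamma_pos_of_pos (by positivity)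
  positivity

lemma integrable_exp_neg_mul_stableGauge {s k : ℝ} (hs : 0 < s) (hk : 0 < k) :
    Integrable fun u : ℝ => Real.exp (-(k * stableGauge s u)) := by
  have hmeas := measurable_stableGauge s
  refine ((integrable_exp_neg_mul_sq hk).add (integrable_exp_neg_mul_abs_rpow hs hk)).mono'
    (Measurable.aestronglyMeasurable (by fun_prop)) (.of_forall fun u => ?_)
  rw [Real.norm_eq_abs, Real.abs_exp, Pi.add_apply, stableGauge]
  rcases min_choice (u ^ 2) (|u| ^ s) with h | h <;> rw [h, ← neg_mul]
  · exact le_add_of_nonneg_right (Real.exp_nonneg _)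
  · exact le_add_of_nonneg_left (Real.exp_nonneg _)

/-- The density at `b` and time `t` given by Fourier inversion, when the characteristic function at
time `t` is `exp (t Ψ)`; `fourierDensity σ ν` is the case `Ψ = charExponent σ ν`. -/
noncomputable def inversionDensity (Ψ : ℝ → ℂ) (t b : ℝ) : ℂ :=
  ((1 / (2 * π) : ℝ) : ℂ) *
    ∫ x : ℝ, Complex.exp (-Complex.I * b * x) * Complex.exp (t * Ψ x)

lemma tendsto_mul_comp_div_sqrt_of_isLittleO {Ψ : ℝ → ℂ} {a : ℂ}
    (hΨ : (fun x : ℝ => Ψ x - a * x ^ 2) =o[𝓝 0] fun x : ℝ => (x : ℂ) ^ 2) (u : ℝ) :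
    Tendsto (fun t : ℝ => (t : ℂ) * Ψ (u / √t)) atTop (𝓝 (a * u ^ 2)) := by
  have hsq {t : ℝ} (ht : 0 < t) : (t : ℂ) * ((u / √t : ℝ) : ℂ) ^ 2 = u ^ 2 := by
    rw [← Complex.ofReal_pow, ← Complex.ofReal_mul, div_pow, Real.sq_sqrt ht.le,
      mul_div_cancel₀ _ ht.ne', Complex.ofReal_pow]
  have hu : Tendsto (fun t : ℝ => u / √t) atTop (𝓝 0) :=
    Real.tendsto_sqrt_atTop.const_div_atTop u
  have hrem : Tendsto (fun t : ℝ => (t : ℂ) * (Ψ (u / √t) - a * ((u / √t : ℝ) : ℂ) ^ 2))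
      atTop (𝓝 0) := by
    have hlittle := (isBigO_refl (fun t : ℝ => (t : ℂ)) atTop).mul_isLittleO (hΨ.comp_tendsto hu)
    refine (isLittleO_one_iff ℂ).1 <|
      hlittle.trans_isBigO <| (isBigO_const_one ℂ ((u : ℂ) ^ 2) atTop).congr' ?_ .rfl
    filter_upwards [eventually_gt_atTop 0] with t ht using (hsq ht).symm
  have hadd := hrem.const_add (a * (u : ℂ) ^ 2)
  rw [add_zero] at hadd
  refine hadd.congr' ?_
  filter_upwards [eventually_gt_atTop 0] with t ht
  linear_combination -a * hsq ht

section LocalLimit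

variable {Ψ : ℝ → ℂ} {s k v : ℝ}

lemma integrable_exp_mul_of_re_le (hs : 0 < s) (hk : 0 < k) (hmeas : Measurable Ψ)
    (hre : ∀ x, (Ψ x).re ≤ -(k * stableGauge s x)) {t : ℝ} (ht : 0 < t) :
    Integrable fun x : ℝ => Complex.exp (t * Ψ x) := by
  refine (integrable_exp_neg_mul_stableGauge hs (mul_pos ht hk)).mono'
    (Measurable.aestronglyMeasurable (by fun_prop)) (.of_forall fun x => ?_)
  rw [Complex.norm_exp, Complex.re_ofReal_mul, mul_assoc, ← mul_neg]
  gcongr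
  exact hre x

lemma mul_re_comp_div_sqrt_le (hs : s ≤ 2) (hk : 0 ≤ k)
    (hre : ∀ x, (Ψ x).re ≤ -(k * stableGauge s x)) {t : ℝ} (ht : 1 ≤ t) (u : ℝ) :
    t * (Ψ (u / √t)).re ≤ -(k * stableGauge s u) := calc
  t * (Ψ (u / √t)).re ≤ t * -(k * stableGauge s (u / √t)) := by gcongr; exact hre _
  _ = -(k * (t * stableGauge s (u / √t))) := by ring
  _ ≤ -(k * stableGauge s u) := by
    gcongr
    exact stableGauge_le_mul_stableGauge_div_sqrt hs ht u

lemma pos_of_isLittleO_of_re_le (hs : s ≤ 2) (hk : 0 < k)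
    (hre : ∀ x, (Ψ x).re ≤ -(k * stableGauge s x))
    (hΨ : (fun x : ℝ => Ψ x - ((-(v / 2) : ℝ) : ℂ) * x ^ 2) =o[𝓝 0] fun x : ℝ => (x : ℂ) ^ 2) :
    0 < v := by
  have hlim := (Complex.continuous_re.tendsto _).comp
    (tendsto_mul_comp_div_sqrt_of_isLittleO hΨ 1)
  have hle : ((-(v / 2) : ℝ) * ((1 : ℝ) : ℂ) ^ 2 : ℂ).re ≤ -(k * stableGauge s 1) := by
    refine le_of_tendsto hlim ?_
    filter_upwards [eventually_ge_atTop 1] with t ht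
    rw [Function.comp_apply, Complex.re_ofReal_mul]
    exact mul_re_comp_div_sqrt_le hs hk.le hre ht 1
  rw [Complex.ofReal_one, one_pow, mul_one, Complex.ofReal_re] at hle
  simp only [stableGauge, one_pow, abs_one, Real.one_rpow, min_self, mul_one] at hle
  linarith

lemma norm_exp_neg_I_mul_mul (b x : ℝ) : ‖Complex.exp (-Complex.I * b * x)‖ = 1 := by
  simp [Complex.norm_exp]

lemma tendsto_integral_exp_comp_div_sqrt (hs0 : 0 < s) (hs2 : s ≤ 2) (hk : 0 < k)
    (hmeas : Measurable Ψ) (hre : ∀ x, (Ψ x).re ≤ -(k * stableGauge s x))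
    (hΨ : (fun x : ℝ => Ψ x - ((-(v / 2) : ℝ) : ℂ) * x ^ 2) =o[𝓝 0] fun x : ℝ => (x : ℂ) ^ 2)
    (b : ℝ) :
    Tendsto (fun t : ℝ => ∫ u : ℝ, Complex.exp (-Complex.I * b * ((u / √t : ℝ) : ℂ)) *
        Complex.exp (t * Ψ (u / √t))) atTop (𝓝 (√(π / (v / 2)) : ℝ)) := by
  rw [← integral_gaussian, ← integral_complex_ofReal]
  refine tendsto_integral_filter_of_dominated_convergence _
    (.of_forall fun t => Measurable.aestronglyMeasurable (by fun_prop)) ?_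
    (integrable_exp_neg_mul_stableGauge hs0 hk) (.of_forall fun u => ?_)
  · filter_upwards [eventually_ge_atTop 1] with t ht
    refine .of_forall fun u => ?_
    rw [norm_mul, norm_exp_neg_I_mul_mul, one_mul, Complex.norm_exp, Complex.re_ofReal_mul]
    exact Real.exp_le_exp.2 (mul_re_comp_div_sqrt_le hs2 hk.le hre ht u)
  · have hphase : Tendsto (fun t : ℝ => Complex.exp (-Complex.I * b * ((u / √t : ℝ) : ℂ)))
        atTop (𝓝 1) := by
      have hcont : Continuous fun x : ℝ => Complex.exp (-Complex.I * b * (x : ℂ)) := by fun_prop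
      simpa [Function.comp_def] using
        (hcont.tendsto 0).comp (Real.tendsto_sqrt_atTop.const_div_atTop u)
    have hgauss := (Complex.continuous_exp.tendsto _).comp
      (tendsto_mul_comp_div_sqrt_of_isLittleO hΨ u)
    simpa [Function.comp_def] using hphase.mul hgauss

lemma sqrt_mul_inversionDensity (Ψ : ℝ → ℂ) (t b : ℝ) :
    ((√(2 * π * t) : ℝ) : ℂ) * inversionDensity Ψ t b =
      ((√(2 * π) / (2 * π) : ℝ) : ℂ) *
        ∫ u : ℝ, Complex.exp (-Complex.I * b * ((u / √t : ℝ) : ℂ)) *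
          Complex.exp (t * Ψ (u / √t)) := by
  rw [Measure.integral_comp_div (fun x : ℝ => Complex.exp (-Complex.I * b * x) *
    Complex.exp (t * Ψ x)), abs_of_nonneg (Real.sqrt_nonneg t), Complex.real_smul,
    inversionDensity, Real.sqrt_mul (by positivity : 0 ≤ 2 * π)]
  push_cast
  ring

lemma sqrt_two_pi_div_mul_sqrt (v : ℝ) : √(2 * π) / (2 * π) * √(π / (v / 2)) = 1 / √v := by
  rw [div_div_eq_mul_div, mul_comm π 2, Real.sqrt_div (by positivity), div_mul_div_comm,
    Real.mul_self_sqrt (by positivity), ← div_div, div_self (by positivity)]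

theorem tendsto_sqrt_mul_inversionDensity (hs0 : 0 < s) (hs2 : s ≤ 2) (hk : 0 < k)
    (hmeas : Measurable Ψ) (hre : ∀ x, (Ψ x).re ≤ -(k * stableGauge s x))
    (hΨ : (fun x : ℝ => Ψ x - ((-(v / 2) : ℝ) : ℂ) * x ^ 2) =o[𝓝 0] fun x : ℝ => (x : ℂ) ^ 2)
    (b : ℝ) :
    Tendsto (fun t : ℝ => ((√(2 * π * t) : ℝ) : ℂ) * inversionDensity Ψ t b) atTop
      (𝓝 ((1 / √v : ℝ) : ℂ)) := by
  simp only [sqrt_mul_inversionDensity, ← sqrt_two_pi_div_mul_sqrt, Complex.ofReal_mul]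
  exact (tendsto_integral_exp_comp_div_sqrt hs0 hs2 hk hmeas hre hΨ b).const_mul _

end LocalLimit

/-- The function `x ↦ e^{ix} - 1 - ix`, whose integral against the Lévy measure is the jump part of
the exponent of a Lévy process with all jumps compensated. -/
noncomputable def compensatedExp (x : ℝ) : ℂ := Complex.exp (Complex.I * x) - 1 - Complex.I * x

lemma continuous_compensatedExp : Continuous compensatedExp := by
  unfold compensatedExp
  fun_prop

lemma re_compensatedExp (x : ℝ) : (compensatedExp x).re = Real.cos x - 1 := by
  simp [compensatedExp, mul_comm Complex.I, Complex.exp_ofReal_mul_I_re]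

lemma norm_compensatedExp_le (x : ℝ) : ‖compensatedExp x‖ ≤ 2 * x ^ 2 := by
  have hnorm : ‖Complex.I * (x : ℂ)‖ = |x| := by simp
  rcases le_total |x| 1 with h | h
  · have := Complex.norm_exp_sub_one_sub_id_le (hnorm.trans_le h)
    rw [hnorm, sq_abs] at this
    exact this.trans (by linarith [sq_nonneg x])
  · calc ‖compensatedExp x‖
        ≤ ‖Complex.exp (Complex.I * x) - 1‖ + ‖Complex.I * (x : ℂ)‖ := norm_sub_le _ _
      _ ≤ |x| + |x| := add_le_add Real.norm_exp_I_mul_ofReal_sub_one_le hnorm.le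
      _ ≤ 2 * x ^ 2 := by nlinarith [sq_abs x]

lemma isLittleO_compensatedExp :
    (fun x : ℝ => compensatedExp x + ((x ^ 2 / 2 : ℝ) : ℂ)) =o[𝓝 0] fun x : ℝ => (x : ℂ) ^ 2 := by
  have hI : Tendsto (fun x : ℝ => Complex.I * (x : ℂ)) (𝓝 0) (𝓝 0) := by
    simpa using (by fun_prop : Continuous fun x : ℝ => Complex.I * (x : ℂ)).tendsto 0
  have htaylor := (Complex.exp_sub_sum_range_succ_isLittleO_pow 2).comp_tendsto hI
  have hsq : (fun x : ℝ => (Complex.I * (x : ℂ)) ^ 2) =O[𝓝 0] fun x : ℝ => (x : ℂ) ^ 2 :=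
    isBigO_of_le _ fun x => by simp
  refine (htaylor.trans_isBigO hsq).congr_left fun x => ?_
  simp only [Function.comp_apply, Finset.sum_range_succ, Finset.sum_range_zero, pow_zero, pow_one,
    Nat.factorial, mul_pow, Complex.I_sq, compensatedExp]
  push_cast
  ring

lemma isLittleO_integral_comp_mul {μ : Measure ℝ} (hμ : Integrable (fun z => z ^ 2) μ)
    {R : ℝ → ℂ} (hR : Continuous R) {C : ℝ} (hC : ∀ x, ‖R x‖ ≤ C * x ^ 2)
    (hlittle : R =o[𝓝 0] fun x : ℝ => (x : ℂ) ^ 2) :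
    (fun x : ℝ => ∫ z, R (x * z) ∂μ) =o[𝓝 0] fun x : ℝ => (x : ℂ) ^ 2 := by
  have hR0 : R 0 = 0 := norm_le_zero_iff.1 (by simpa using hC 0)
  have hpointwise (z : ℝ) : Tendsto (fun x : ℝ => R (x * z) / (x : ℂ) ^ 2) (𝓝 0) (𝓝 0) := by
    have hz : Tendsto (fun x : ℝ => x * z) (𝓝 0) (𝓝 0) := by
      simpa using (continuous_mul_const z).tendsto 0
    refine ((hlittle.comp_tendsto hz).trans_isBigO ?_).tendsto_div_nhds_zero
    simpa [Function.comp_def, mul_pow, mul_comm] using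
      (isBigO_refl (fun x : ℝ => (x : ℂ) ^ 2) (𝓝 0)).const_mul_left ((z : ℂ) ^ 2)
  refine (isLittleO_iff_tendsto fun x hx => ?_).2 ?_
  · simp [Complex.ofReal_eq_zero.1 (pow_eq_zero_iff two_ne_zero |>.1 hx), hR0]
  · simp_rw [← integral_div]
    rw [← integral_zero ℝ ℂ (μ := μ)]
    refine tendsto_integral_filter_of_dominated_convergence (fun z => C * z ^ 2)
      (.of_forall fun x => by fun_prop) (.of_forall fun x => .of_forall fun z => ?_)
      (hμ.const_mul C) (.of_forall hpointwise)
    rw [norm_div, norm_pow, Complex.norm_real, Real.norm_eq_abs, sq_abs]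
    refine div_le_of_le_mul₀ (sq_nonneg x) ((norm_nonneg _).trans (hC z)) ((hC _).trans_eq ?_)
    ring

/-- The exponent `Ψ(iλ) = -σ²λ²/2 + ∫ (e^{iλz} - 1 - iλz) μ(dz)` of a centred Lévy process whose
Lévy measure `μ`, on the whole line, has a finite second moment; `charExponent σ ν` is the case of
`ν` restricted to the negative half-line. -/
noncomputable def levyExponent (σ : ℝ) (μ : Measure ℝ) (x : ℝ) : ℂ :=
  ((-(σ ^ 2 * x ^ 2) / 2 : ℝ) : ℂ) + ∫ z, compensatedExp (x * z) ∂μ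

section LevyExponent

variable {μ : Measure ℝ} (hμ : Integrable (fun z => z ^ 2) μ)

include hμ

lemma integrable_compensatedExp_mul (x : ℝ) : Integrable (fun z => compensatedExp (x * z)) μ := by
  refine ((hμ.const_mul (x ^ 2)).const_mul 2).mono'
    (continuous_compensatedExp.comp (continuous_const_mul x)).aestronglyMeasurable
    (.of_forall fun z => ?_)
  simpa only [mul_pow] using norm_compensatedExp_le (x * z)

lemma continuous_levyExponent (σ : ℝ) : Continuous (levyExponent σ μ) := by
  have hcont := continuous_compensatedExp
  refine .add (by fun_prop) (continuous_iff_continuousAt.2 fun x₀ => ?_)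
  refine continuousAt_of_dominated (bound := fun z => 2 * ((x₀ ^ 2 + 1) * z ^ 2))
    (.of_forall fun x => by fun_prop) ?_ ((hμ.const_mul _).const_mul _)
    (.of_forall fun z => by fun_prop)
  filter_upwards [((continuous_pow 2).tendsto x₀).eventually_le_const (lt_add_one _)] with x hx
  refine .of_forall fun z => (norm_compensatedExp_le _).trans ?_
  rw [mul_pow]
  gcongr

lemma isLittleO_levyExponent (σ : ℝ) :
    (fun x : ℝ => levyExponent σ μ x - ((-((σ ^ 2 + ∫ z, z ^ 2 ∂μ) / 2) : ℝ) : ℂ) * x ^ 2)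
      =o[𝓝 0] fun x : ℝ => (x : ℂ) ^ 2 := by
  have hcont := continuous_compensatedExp
  have hbound (x : ℝ) : ‖compensatedExp x + ((x ^ 2 / 2 : ℝ) : ℂ)‖ ≤ 3 * x ^ 2 := by
    refine (norm_add_le _ _).trans ?_
    rw [Complex.norm_real, Real.norm_of_nonneg (by positivity)]
    linarith [norm_compensatedExp_le x, sq_nonneg x]
  refine (isLittleO_integral_comp_mul hμ (by fun_prop) hbound isLittleO_compensatedExp).congr_left
    fun x => ?_
  have hsq : Integrable (fun z => (((x * z) ^ 2 / 2 : ℝ) : ℂ)) μ := by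
    simp only [mul_pow]
    exact ((hμ.const_mul (x ^ 2)).div_const 2).ofReal
  have hint : ∫ z, (x * z) ^ 2 / 2 ∂μ = x ^ 2 * (∫ z, z ^ 2 ∂μ) / 2 := by
    simp only [mul_pow, integral_div, integral_const_mul]
  rw [integral_add (integrable_compensatedExp_mul hμ x) hsq, integral_complex_ofReal, hint,
    levyExponent]
  push_cast
  ring

lemma integrable_one_sub_cos_mul (x : ℝ) : Integrable (fun z => 1 - Real.cos (x * z)) μ := by
  refine (integrable_compensatedExp_mul hμ x).re.neg.congr
    (.of_forall fun z => by simp [re_compensatedExp])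

lemma re_levyExponent (σ x : ℝ) :
    (levyExponent σ μ x).re = -(σ ^ 2 * x ^ 2) / 2 - ∫ z, (1 - Real.cos (x * z)) ∂μ := by
  have hre : (∫ z, compensatedExp (x * z) ∂μ).re = ∫ z, (compensatedExp (x * z)).re ∂μ :=
    (integral_re (integrable_compensatedExp_mul hμ x)).symm
  simp only [levyExponent, Complex.add_re, Complex.ofReal_re, hre, re_compensatedExp]
  rw [sub_eq_add_neg, ← integral_neg]
  simp only [neg_sub]

lemma re_levyExponent_le_neg_sq (σ x : ℝ) :
    (levyExponent σ μ x).re ≤ -(σ ^ 2 / 2 * x ^ 2) := by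
  have : 0 ≤ ∫ z, (1 - Real.cos (x * z)) ∂μ :=
    integral_nonneg fun z => sub_nonneg.2 (Real.cos_le_one _)
  rw [re_levyExponent hμ]
  linarith

lemma re_levyExponent_le_neg_setIntegral_sq (σ : ℝ) {x r : ℝ} (hxr : |x| * r ≤ π) :
    (levyExponent σ μ x).re ≤ -(2 / π ^ 2 * x ^ 2 * ∫ z in Ioo (-r) r, z ^ 2 ∂μ) := by
  have hcos : Integrable (fun z => 1 - Real.cos (x * z)) μ := integrable_one_sub_cos_mul hμ x
  have hlower : 2 / π ^ 2 * x ^ 2 * ∫ z in Ioo (-r) r, z ^ 2 ∂μ ≤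
      ∫ z, (1 - Real.cos (x * z)) ∂μ := calc
    _ = ∫ z in Ioo (-r) r, 2 / π ^ 2 * x ^ 2 * z ^ 2 ∂μ := (integral_const_mul _ _).symm
    _ ≤ ∫ z in Ioo (-r) r, (1 - Real.cos (x * z)) ∂μ := by
      refine setIntegral_mono_on (hμ.const_mul _).integrableOn hcos.integrableOn
        measurableSet_Ioo fun z hz => ?_
      have hxz : |x * z| ≤ π := by
        rw [abs_mul]
        exact (mul_le_mul_of_nonneg_left (abs_lt.2 hz).le (abs_nonneg x)).trans hxr
      linarith [Real.cos_le_one_sub_mul_cos_sq hxz, mul_pow x z 2]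
    _ ≤ ∫ z, (1 - Real.cos (x * z)) ∂μ :=
      setIntegral_le_integral hcos (.of_forall fun z => sub_nonneg.2 (Real.cos_le_one _))
  rw [re_levyExponent hμ]
  linarith [mul_nonneg (sq_nonneg σ) (sq_nonneg x)]

lemma exists_re_levyExponent_le_of_rpow_le (σ : ℝ) {s a : ℝ} (ha : 0 < a)
    (hsmall : ∀ᶠ r in 𝓝[>] (0 : ℝ), a * r ^ (2 - s) ≤ ∫ z in Ioo (-r) r, z ^ 2 ∂μ) :
    ∃ k > 0, ∀ x, (levyExponent σ μ x).re ≤ -(k * stableGauge s x) := by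
  obtain ⟨d, hd0 : 0 < d, hd⟩ := mem_nhdsGT_iff_exists_Ioc_subset.1
    (hsmall.and (Ioc_mem_nhdsGT Real.pi_pos))
  have hdπ : d ≤ π := (hd ⟨hd0, le_rfl⟩).2.2
  have hdecay {x r : ℝ} (hr : r ∈ Ioc 0 d) (hxr : |x| * r ≤ π) :
      (levyExponent σ μ x).re ≤ -(2 / π ^ 2 * x ^ 2 * (a * r ^ (2 - s))) := by
    refine (re_levyExponent_le_neg_setIntegral_sq hμ σ hxr).trans ?_
    gcongr
    exact (hd hr).1
  refine ⟨2 / π ^ 2 * a * d ^ (2 - s), by positivity, fun x => ?_⟩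
  rcases le_total |x| 1 with hx | hx
  · calc (levyExponent σ μ x).re
        ≤ -(2 / π ^ 2 * x ^ 2 * (a * d ^ (2 - s))) :=
          hdecay ⟨hd0, le_rfl⟩ ((mul_le_of_le_one_left hd0.le hx).trans hdπ)
      _ = -(2 / π ^ 2 * a * d ^ (2 - s) * x ^ 2) := by ring
      _ ≤ -(2 / π ^ 2 * a * d ^ (2 - s) * stableGauge s x) := by
        gcongr
        exact stableGauge_le_sq s x
  · have hx0 : 0 < |x| := by linarith
    have hscale : x ^ 2 * (d / |x|) ^ (2 - s) = d ^ (2 - s) * |x| ^ s := by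
      rw [Real.div_rpow hd0.le hx0.le, Real.rpow_sub hx0, Real.rpow_two, sq_abs]
      have : x ≠ 0 := abs_pos.1 hx0
      field_simp
    calc (levyExponent σ μ x).re
        ≤ -(2 / π ^ 2 * x ^ 2 * (a * (d / |x|) ^ (2 - s))) :=
          hdecay ⟨by positivity, div_le_self hd0.le hx⟩ (by rwa [mul_div_cancel₀ _ hx0.ne'])
      _ = -(2 / π ^ 2 * a * d ^ (2 - s) * |x| ^ s) := by
        linear_combination (-(2 / π ^ 2 * a)) * hscale
      _ ≤ -(2 / π ^ 2 * a * d ^ (2 - s) * stableGauge s x) := by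
        gcongr
        exact stableGauge_le_rpow s x

lemma exists_re_levyExponent_le {σ s : ℝ}
    (hcase : σ ≠ 0 ∨ ∃ a > 0, ∀ᶠ r in 𝓝[>] (0 : ℝ),
      a * r ^ (2 - s) ≤ ∫ z in Ioo (-r) r, z ^ 2 ∂μ) :
    ∃ k > 0, ∀ x, (levyExponent σ μ x).re ≤ -(k * stableGauge s x) := by
  rcases hcase with hσ | ⟨a, ha, hsmall⟩
  · refine ⟨σ ^ 2 / 2, by positivity, fun x => (re_levyExponent_le_neg_sq hμ σ x).trans ?_⟩
    gcongr
    exact stableGauge_le_sq s x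
  · exact exists_re_levyExponent_le_of_rpow_le hμ σ ha hsmall

end LevyExponent

theorem density_asymptotics_gaussian_general {σ s : ℝ} (hs0 : 0 < s) (hs2 : s ≤ 2)
    {μ : Measure ℝ} (hμ : Integrable (fun z => z ^ 2) μ)
    (hcase : σ ≠ 0 ∨ ∃ a > 0, ∀ᶠ r in 𝓝[>] (0 : ℝ),
      a * r ^ (2 - s) ≤ ∫ z in Ioo (-r) r, z ^ 2 ∂μ) (b : ℝ) :
    0 < σ ^ 2 + ∫ z, z ^ 2 ∂μ ∧
    (∀ t : ℝ, 0 < t → Integrable fun x : ℝ => Complex.exp (t * levyExponent σ μ x)) ∧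
    Tendsto (fun t : ℝ => ((√(2 * π * t) : ℝ) : ℂ) * inversionDensity (levyExponent σ μ) t b) atTop
      (𝓝 ((1 / √(σ ^ 2 + ∫ z, z ^ 2 ∂μ) : ℝ) : ℂ)) := by
  obtain ⟨k, hk, hre⟩ := exists_re_levyExponent_le hμ hcase
  have hmeas := (continuous_levyExponent hμ σ).measurable
  have hΨ := isLittleO_levyExponent hμ σ
  exact ⟨pos_of_isLittleO_of_re_le hs2 hk hre hΨ,
    fun t ht => integrable_exp_mul_of_re_le hs0 hk hmeas hre ht,
    tendsto_sqrt_mul_inversionDensity hs0 hs2 hk hmeas hre hΨ b⟩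

lemma charExponent_eq_levyExponent (σ : ℝ) (ν : Measure ℝ) :
    charExponent σ ν = levyExponent σ (ν.restrict (Iio 0)) := by
  ext x
  simp only [charExponent, levyExponent, compensatedExp, Complex.ofReal_mul, mul_assoc]

lemma fourierDensity_eq_inversionDensity (σ : ℝ) (ν : Measure ℝ) :
    fourierDensity σ ν = inversionDensity (levyExponent σ (ν.restrict (Iio 0))) := by
  rw [← charExponent_eq_levyExponent]
  rfl

lemma integrableOn_sq_Iio_zero {ν : Measure ℝ}
    (hmin : ∫⁻ z, ENNReal.ofReal (min (z ^ 2) |z|) ∂ν ≠ ⊤)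
    (hbig : ∫⁻ z in Iio (-1 : ℝ), ENNReal.ofReal (z ^ 2) ∂ν ≠ ⊤) :
    IntegrableOn (fun z : ℝ => z ^ 2) (Iio 0) ν := by
  have hlarge : IntegrableOn (fun z : ℝ => z ^ 2) (Iio (-1)) ν :=
    (lintegral_ofReal_ne_top_iff_integrable (by fun_prop) (.of_forall sq_nonneg)).1 hbig
  have hmin' : Integrable (fun z : ℝ => min (z ^ 2) |z|) ν :=
    (lintegral_ofReal_ne_top_iff_integrable (by fun_prop)
      (.of_forall fun z => le_min (sq_nonneg z) (abs_nonneg z))).1 hmin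
  have hsmall : IntegrableOn (fun z : ℝ => z ^ 2) (Ico (-1) 0) ν := by
    refine hmin'.integrableOn.congr_fun (fun z hz => min_eq_left ?_) measurableSet_Ico
    rw [abs_of_neg hz.2]
    nlinarith [hz.1, hz.2]
  rw [← Iio_union_Ico_eq_Iio (show (-1 : ℝ) ≤ 0 by norm_num)]
  exact hlarge.union hsmall

lemma exists_mul_rpow_le_of_liminf_pos {f : ℝ → ℝ} {p : ℝ}
    (hf : 0 < liminf (fun r => r ^ (-p) * f r) (𝓝[>] 0)) :
    ∃ a > 0, ∀ᶠ r in 𝓝[>] (0 : ℝ), a * r ^ p ≤ f r := by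
  obtain ⟨a, ha, hev⟩ : ∃ a > 0, ∀ᶠ r in 𝓝[>] (0 : ℝ), a ≤ r ^ (-p) * f r := by
    by_contra hcon
    rw [liminf_eq] at hf
    exact hf.not_ge (Real.sSup_nonpos fun a ha => not_lt.1 fun ha0 => hcon ⟨a, ha0, ha⟩)
  refine ⟨a, ha, ?_⟩
  filter_upwards [hev, self_mem_nhdsWithin] with r hr (hr0 : 0 < r)
  rwa [Real.rpow_neg hr0.le, le_inv_mul_iff₀ (Real.rpow_pos_of_pos hr0 p), mul_comm] at hr

lemma toReal_setLIntegral_sq_Ioo_neg (ν : Measure ℝ) {r : ℝ} (hr : 0 ≤ r) :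
    (∫⁻ z in Ioo (-r) 0, ENNReal.ofReal (z ^ 2) ∂ν).toReal =
      ∫ z in Ioo (-r) r, z ^ 2 ∂(ν.restrict (Iio 0)) := by
  rw [Measure.restrict_restrict measurableSet_Ioo, Ioo_inter_Iio, min_eq_right hr,
    integral_eq_lintegral_of_nonneg_ae (.of_forall sq_nonneg) (by fun_prop)]

lemma exists_mul_rpow_le_setIntegral_sq_of_liminf_pos {ν : Measure ℝ} {s : ℝ}
    (hν : 0 < liminf
      (fun r => r ^ (s - 2) * (∫⁻ z in Ioo (-r) (0 : ℝ), ENNReal.ofReal (z ^ 2) ∂ν).toReal)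
      (𝓝[>] 0)) :
    ∃ a > 0, ∀ᶠ r in 𝓝[>] (0 : ℝ),
      a * r ^ (2 - s) ≤ ∫ z in Ioo (-r) r, z ^ 2 ∂(ν.restrict (Iio 0)) := by
  rw [← neg_sub] at hν
  obtain ⟨a, ha, hev⟩ := exists_mul_rpow_le_of_liminf_pos hν
  refine ⟨a, ha, ?_⟩
  filter_upwards [hev, self_mem_nhdsWithin] with r hr (hr0 : 0 < r)
  rwa [toReal_setLIntegral_sq_Ioo_neg ν hr0.le] at hr

/-- Key asymptotic (4.4) in the proof of Theorem 2.2 of the paper: in the Gaussian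
regime the density of `X_t` at `b` satisfies `√(2πt) p(t,b) → 1/c`,
where `c² = σ² + ∫ z² ν(dz)`. -/
theorem density_asymptotics_gaussian (σ s : ℝ) (hσ : 0 ≤ σ) (hs1 : 0 < s) (hs2 : s < 2)
    (ν : MeasureTheory.Measure ℝ) [SigmaFinite ν]
    (hconc : ν (Ici (0 : ℝ)) = 0)
    (hmin : ∫⁻ z, ENNReal.ofReal (min (z ^ 2) |z|) ∂ν ≠ ⊤)
    (hbig : ∫⁻ z in Iio (-1 : ℝ), ENNReal.ofReal (z ^ 2) ∂ν ≠ ⊤)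
    (hcase : 0 < σ ∨ 0 < Filter.liminf
      (fun x => x ^ (s - 2) * (∫⁻ z in Ioo (-x) (0 : ℝ), ENNReal.ofReal (z ^ 2) ∂ν).toReal)
      (nhdsWithin 0 (Ioi 0)))
    (b : ℝ) :
    (∀ t : ℝ, 1 < t → Integrable (fun lam : ℝ => Complex.exp ((t : ℂ) * charExponent σ ν lam))) ∧
    Tendsto (fun t : ℝ => ((Real.sqrt (2 * Real.pi * t) : ℝ) : ℂ) * fourierDensity σ ν t b)
      atTop
      (nhds ((1 / Real.sqrt (σ ^ 2 + ∫ z in Iio (0 : ℝ), z ^ 2 ∂ν) : ℝ) : ℂ)) := by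
  rw [charExponent_eq_levyExponent, fourierDensity_eq_inversionDensity]
  obtain ⟨-, hint, hlim⟩ := density_asymptotics_gaussian_general hs1 hs2.le
    (integrableOn_sq_Iio_zero hmin hbig)
    (hcase.imp ne_of_gt exists_mul_rpow_le_setIntegral_sq_of_liminf_pos) b
  exact ⟨fun t ht => hint t (one_pos.trans ht), hlim⟩
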